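/- Fix d, m, n ≥ 1, p and R > 0. Let g : ℝ^d → ℝ^{m×n}, h : ℝ^d → (0, ∞), and S a map from Borel probability measures on ℝ^d to ℝ^n such that: (a) for some ς ≥ 0 and L > 0, max(‖g(x) − g(y)‖_F, |h(x) − h(y)|) ≤ L (1 + |x| + |y|)^ς |x − y| for all x, y ∈ ℝ^d; and (b) there is L_S > 0 with |S(μ) − S(ν)| ≤ L_S · W_p(μ, ν) for all μ, ν ∈ P_{p,R}(ℝ^d). Then, provided p ≥ 2ς + 2, there exists a constant C > 0 such that for all μ, ν ∈ P_{p,R}(ℝ^d) and every coupling π of μ and ν, ( ∬ | g(x) S(μ) / √(∫ h dμ) − g(y) S(ν) / √(∫ h dν) |^2 π(dx dy) )^{1/2} ≤ C ( ∬ |x − y|^p π(dx dy) )^{1/p}. -/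

import Mathlib

open MeasureTheory ENNReal
open scoped NNReal

noncomputable section

/-- Euclidean space `ℝ^d`. -/
abbrev Rd (d : ℕ) := EuclideanSpace ℝ (Fin d)

/-- The weight function `x ↦ exp (-β f x)`. -/
def wFn (β : ℝ) {d : ℕ} (f : Rd d → ℝ) (x : Rd d) : ℝ := Real.exp (-β * f x)

/-- The weighted mean `M_β(μ) = (∫ x e^{-β f x} dμ) / (∫ e^{-β f x} dμ)`. -/
def wMean (β : ℝ) {d : ℕ} (f : Rd d → ℝ) (μ : Measure (Rd d)) : Rd d :=
  (∫ x, wFn β f x ∂μ)⁻¹ • ∫ x, wFn β f x • x ∂μ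

/-- The weighted covariance `C_β(μ)`, a `d × d` matrix. -/
def wCov (β : ℝ) {d : ℕ} (f : Rd d → ℝ) (μ : Measure (Rd d)) :
    Matrix (Fin d) (Fin d) ℝ := fun i j =>
  (∫ x, wFn β f x ∂μ)⁻¹ *
    ∫ x, wFn β f x * ((x i - wMean β f μ i) * (x j - wMean β f μ j)) ∂μ

/-- Frobenius norm of a matrix. -/
def frobNorm {m n : ℕ} (A : Matrix (Fin m) (Fin n) ℝ) : ℝ :=
  Real.sqrt (∑ i, ∑ j, (A i j) ^ 2)

/-- `S` is the (unique) positive semidefinite square root of `A`. -/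
def IsPSDSqrt {d : ℕ} (S A : Matrix (Fin d) (Fin d) ℝ) : Prop :=
  S.PosSemidef ∧ S * S = A

/-- `μ ∈ P_{p,R}`: the `p`-th moment of `μ` is bounded, `(∫ |x|^p dμ)^{1/p} ≤ R`. -/
def MomLE (p R : ℝ) {d : ℕ} (μ : Measure (Rd d)) : Prop :=
  ∫⁻ x, (‖x‖₊ : ℝ≥0∞) ^ p ∂μ ≤ ENNReal.ofReal (R ^ p)

/-- `μ ∈ P_p`: the `p`-th moment of `μ` is finite. -/
def MomFin (p : ℝ) {d : ℕ} (μ : Measure (Rd d)) : Prop :=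
  ∫⁻ x, (‖x‖₊ : ℝ≥0∞) ^ p ∂μ < ⊤

/-- The Wasserstein-`p` distance between two probability measures on `ℝ^d`:
the infimum over couplings `π` of `μ` and `ν` of `(∬ |x - y|^p dπ)^{1/p}`. -/
def Wp (p : ℝ) {d : ℕ} (μ ν : Measure (Rd d)) : ℝ :=
  (sInf {c : ℝ≥0∞ | ∃ π : Measure (Rd d × Rd d),
      π.map Prod.fst = μ ∧ π.map Prod.snd = ν ∧
      c = (∫⁻ z, (‖z.1 - z.2‖₊ : ℝ≥0∞) ^ p ∂π) ^ (1 / p)}).toReal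

/-- `f_* = inf f`. -/
def fStar {d : ℕ} (f : Rd d → ℝ) : ℝ := sInf (Set.range f)

/-- The class `A(s, ℓ, u)` of objective functions: `f` is bounded from below,
locally Lipschitz with growth exponent `s`, and `f - inf f` grows at least like
`|x|^ℓ` and at most like `|x|^u`. -/
structure ClassA {d : ℕ} (s ℓ u : ℝ) (f : Rd d → ℝ) : Prop where
  bddBelow : BddBelow (Set.range f)
  lip : ∃ Lf > 0, ∀ x y : Rd d, |f x - f y| ≤ Lf * (1 + ‖x‖ + ‖y‖) ^ s * ‖x - y‖
  growth_lower : ∃ cl > 0, ∃ Cl > 0, ∀ x : Rd d, cl * ‖x‖ ^ ℓ - Cl ≤ f x - fStar f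
  growth_upper : ∃ cu > 0, ∃ Cu > 0, ∀ x : Rd d, f x - fStar f ≤ cu * ‖x‖ ^ u + Cu

/-- `p_M(s, ℓ) = s + 2` if `ℓ = 0`, and `1` if `ℓ > 0`. -/
def pM (s ℓ : ℝ) : ℝ := if ℓ = 0 then s + 2 else 1

/-- `p_C(s, ℓ) = s + 3` if `ℓ = 0`, and `1` if `ℓ > 0`. -/
def pC (s ℓ : ℝ) : ℝ := if ℓ = 0 then s + 3 else 1

/-- The Euclidean norm of a vector `v ∈ ℝ^k` given as a plain function. -/
def vecNorm {k : ℕ} (v : Fin k → ℝ) : ℝ := Real.sqrt (∑ i, v i ^ 2)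

lemma vecNorm_eq {k : ℕ} (v : Fin k → ℝ) : vecNorm v = ‖(WithLp.toLp 2 v : Rd k)‖ := by
  simp [vecNorm, EuclideanSpace.norm_eq]

lemma vecNorm_add_le {k : ℕ} (u v : Fin k → ℝ) : vecNorm (u + v) ≤ vecNorm u + vecNorm v := by
  simp only [vecNorm_eq, WithLp.toLp_add]
  exact norm_add_le _ _

lemma vecNorm_smul {k : ℕ} (c : ℝ) (v : Fin k → ℝ) : vecNorm (c • v) = |c| * vecNorm v := by
  simp only [vecNorm_eq, WithLp.toLp_smul, norm_smul, Real.norm_eq_abs]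

lemma vecNorm_nonneg {k : ℕ} (v : Fin k → ℝ) : 0 ≤ vecNorm v := Real.sqrt_nonneg _

lemma frobNorm_nonneg {m n : ℕ} (A : Matrix (Fin m) (Fin n) ℝ) : 0 ≤ frobNorm A :=
  Real.sqrt_nonneg _

lemma vecNorm_mulVec_le {m n : ℕ} (A : Matrix (Fin m) (Fin n) ℝ) (v : Fin n → ℝ) :
    vecNorm (A.mulVec v) ≤ frobNorm A * vecNorm v := by
  unfold vecNorm frobNorm
  rw [← Real.sqrt_mul (by positivity)]
  apply Real.sqrt_le_sqrt
  rw [Finset.sum_mul]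
  apply Finset.sum_le_sum
  intro i _
  exact Finset.sum_mul_sq_le_sq_mul_sq Finset.univ (fun j => A i j) v

/-- weight -/
def wt {d : ℕ} (z : Rd d × Rd d) : ℝ := 1 + ‖z.1‖ + ‖z.2‖

lemma one_le_wt {d : ℕ} (z : Rd d × Rd d) : 1 ≤ wt z := by
  unfold wt; have := norm_nonneg z.1; have := norm_nonneg z.2; linarith

lemma wt_pos {d : ℕ} (z : Rd d × Rd d) : 0 < wt z := lt_of_lt_of_le one_pos (one_le_wt z)

lemma measurable_wt {d : ℕ} : Measurable (wt : Rd d × Rd d → ℝ) := by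
  unfold wt; fun_prop

lemma wt_pow_le {d : ℕ} {p : ℝ} (hp : 0 ≤ p) (z : Rd d × Rd d) :
    wt z ^ p ≤ 3 ^ p * (1 + ‖z.1‖ ^ p + ‖z.2‖ ^ p) := by
  have h1 := norm_nonneg z.1
  have h2 := norm_nonneg z.2
  have e1 : 0 ≤ ‖z.1‖ ^ p := Real.rpow_nonneg h1 p
  have e2 : 0 ≤ ‖z.2‖ ^ p := Real.rpow_nonneg h2 p
  have key : ∀ M : ℝ, 0 ≤ M → wt z ≤ 3 * M → M ^ p ≤ 1 + ‖z.1‖ ^ p + ‖z.2‖ ^ p →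
      wt z ^ p ≤ 3 ^ p * (1 + ‖z.1‖ ^ p + ‖z.2‖ ^ p) := by
    intro M hM hw hMp
    calc wt z ^ p ≤ (3 * M) ^ p := Real.rpow_le_rpow (wt_pos z).le hw hp
      _ = 3 ^ p * M ^ p := Real.mul_rpow (by norm_num) hM
      _ ≤ _ := by gcongr
  unfold wt at key ⊢
  rcases le_total ‖z.1‖ 1 with ha | ha <;> rcases le_total ‖z.2‖ 1 with hb | hb
  · exact key 1 one_pos.le (by linarith) (by rw [Real.one_rpow]; linarith)
  · exact key ‖z.2‖ h2 (by linarith) (by linarith)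
  · exact key ‖z.1‖ h1 (by linarith) (by linarith)
  · rcases le_total ‖z.1‖ ‖z.2‖ with hc | hc
    · exact key ‖z.2‖ h2 (by linarith) (by linarith)
    · exact key ‖z.1‖ h1 (by linarith) (by linarith)

lemma ofReal_norm_rpow {d : ℕ} {p : ℝ} (hp : 0 ≤ p) (x : Rd d) :
    ENNReal.ofReal (‖x‖ ^ p) = (‖x‖₊ : ℝ≥0∞) ^ p := by
  rw [← ENNReal.ofReal_rpow_of_nonneg (norm_nonneg x) hp, ofReal_norm]; rfl

/-- the moment constant -/
def Kc (p R : ℝ) : ℝ := 3 ^ p * (1 + R ^ p + R ^ p)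

lemma one_le_Kc {p R : ℝ} (hp : 0 ≤ p) (hR : 0 < R) : 1 ≤ Kc p R := by
  unfold Kc
  have h1 : (1 : ℝ) ≤ 3 ^ p := Real.one_le_rpow (by norm_num) hp
  have h2 : 0 ≤ R ^ p := Real.rpow_nonneg hR.le p
  nlinarith

section cpl
variable {d : ℕ} {p R : ℝ} {μ ν : Measure (Rd d)} {π : Measure (Rd d × Rd d)}

lemma lintegral_wt_le (hp : 0 ≤ p) (hR : 0 < R)
    (hμ : MomLE p R (π.map Prod.fst)) (hν : MomLE p R (π.map Prod.snd))
    [IsProbabilityMeasure π] :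
    ∫⁻ z, ENNReal.ofReal (wt z ^ p) ∂π ≤ ENNReal.ofReal (Kc p R) := by
  unfold MomLE at hμ hν
  rw [lintegral_map (by fun_prop) measurable_fst] at hμ
  rw [lintegral_map (by fun_prop) measurable_snd] at hν
  have hRp : 0 ≤ R ^ p := Real.rpow_nonneg hR.le p
  calc ∫⁻ z, ENNReal.ofReal (wt z ^ p) ∂π
      ≤ ∫⁻ z, ENNReal.ofReal (3 ^ p) * (1 + (‖z.1‖₊ : ℝ≥0∞) ^ p + (‖z.2‖₊ : ℝ≥0∞) ^ p) ∂π := by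
        apply lintegral_mono
        intro z
        refine (ENNReal.ofReal_le_ofReal (wt_pow_le hp z)).trans ?_
        rw [ENNReal.ofReal_mul (by positivity), ENNReal.ofReal_add (by positivity) (by positivity),
          ENNReal.ofReal_add (by positivity) (by positivity), ofReal_norm_rpow hp,
          ofReal_norm_rpow hp, ENNReal.ofReal_one]
    _ = ENNReal.ofReal (3 ^ p) * (1 + ∫⁻ z, (‖z.1‖₊ : ℝ≥0∞) ^ p ∂π
          + ∫⁻ z, (‖z.2‖₊ : ℝ≥0∞) ^ p ∂π) := by
        rw [lintegral_const_mul _ (by fun_prop), lintegral_add_left (by fun_prop),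
          lintegral_add_left (by fun_prop)]
        simp
    _ ≤ ENNReal.ofReal (3 ^ p) * (1 + ENNReal.ofReal (R ^ p) + ENNReal.ofReal (R ^ p)) := by
        gcongr
    _ = ENNReal.ofReal (Kc p R) := by
        unfold Kc
        rw [ENNReal.ofReal_mul (by positivity), ENNReal.ofReal_add (by positivity) (by positivity),
          ENNReal.ofReal_add (by positivity) (by positivity), ENNReal.ofReal_one]

lemma holder_wt (hp : 0 < p) (hR : 0 < R) {r : ℝ} (hr : 0 ≤ r) (hrp : r ≤ p)
    (hμ : MomLE p R (π.map Prod.fst)) (hν : MomLE p R (π.map Prod.snd))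
    [IsProbabilityMeasure π] :
    ∫⁻ z, ENNReal.ofReal (wt z ^ (p - r) * ‖z.1 - z.2‖ ^ r) ∂π
      ≤ ENNReal.ofReal (Kc p R) * (∫⁻ z, (‖z.1 - z.2‖₊ : ℝ≥0∞) ^ p ∂π) ^ (r / p) := by
  have hK := one_le_Kc hp.le hR
  have h1 := ENNReal.lintegral_mul_norm_pow_le (μ := π)
    (f := fun z => ENNReal.ofReal (wt z ^ p)) (g := fun z => (‖z.1 - z.2‖₊ : ℝ≥0∞) ^ p)
    (p := (p - r) / p) (q := r / p)
    ((measurable_wt.pow_const p).ennreal_ofReal.aemeasurable)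
    (by fun_prop) (div_nonneg (by linarith) hp.le) (by positivity) (by field_simp; ring)
  refine le_trans (le_of_eq ?_) (h1.trans ?_)
  · apply lintegral_congr
    intro z
    rw [ENNReal.ofReal_mul (Real.rpow_nonneg (wt_pos z).le _), ofReal_norm_rpow hr,
      ← ENNReal.rpow_mul, ENNReal.ofReal_rpow_of_pos (Real.rpow_pos_of_pos (wt_pos z) _),
      ← Real.rpow_mul (wt_pos z).le]
    congr 3 <;> field_simp
  · gcongr
    calc (∫⁻ z, ENNReal.ofReal (wt z ^ p) ∂π) ^ ((p - r) / p)
        ≤ ENNReal.ofReal (Kc p R) ^ ((p - r) / p) :=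
          ENNReal.rpow_le_rpow (lintegral_wt_le hp.le hR hμ hν)
            (div_nonneg (by linarith) hp.le)
      _ ≤ ENNReal.ofReal (Kc p R) ^ (1 : ℝ) := by
          apply ENNReal.rpow_le_rpow_of_exponent_le
          · simpa using hK
          · rw [div_le_one hp]; linarith
      _ = _ := by simp

lemma cost_ne_top (hp : 0 < p) (hR : 0 < R)
    (hμ : MomLE p R (π.map Prod.fst)) (hν : MomLE p R (π.map Prod.snd))
    [IsProbabilityMeasure π] :
    ∫⁻ z, (‖z.1 - z.2‖₊ : ℝ≥0∞) ^ p ∂π ≠ ⊤ := by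
  refine ne_top_of_le_ne_top ENNReal.ofReal_ne_top
    (le_trans (lintegral_mono ?_) (lintegral_wt_le hp.le hR hμ hν))
  intro z
  dsimp only
  rw [← ofReal_norm_rpow hp.le]
  apply ENNReal.ofReal_le_ofReal
  apply Real.rpow_le_rpow (norm_nonneg _) _ hp.le
  unfold wt
  linarith [norm_sub_le z.1 z.2]

lemma Wp_le (hμ : π.map Prod.fst = μ) (hν : π.map Prod.snd = ν) 
    (hfin : (∫⁻ z, (‖z.1 - z.2‖₊ : ℝ≥0∞) ^ p ∂π) ^ (1 / p) ≠ ⊤) :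
    Wp p μ ν ≤ ((∫⁻ z, (‖z.1 - z.2‖₊ : ℝ≥0∞) ^ p ∂π) ^ (1 / p)).toReal := by
  unfold Wp
  exact ENNReal.toReal_mono hfin (sInf_le ⟨π, hμ, hν, rfl⟩)

lemma integrable_of_bound (hp : 0 < p) (hR : 0 < R)
    (hμ : MomLE p R (π.map Prod.fst)) (hν : MomLE p R (π.map Prod.snd))
    [IsProbabilityMeasure π] {f : Rd d × Rd d → ℝ} (hf : Measurable f) {B : ℝ}
    (hB : ∀ z, |f z| ≤ B * wt z ^ p) : Integrable f π := by
  have h0 : Integrable (fun z => wt z ^ p) π := by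
    refine ⟨(measurable_wt.pow_const p).aestronglyMeasurable, ?_⟩
    rw [hasFiniteIntegral_iff_ofReal (ae_of_all _ fun z => Real.rpow_nonneg (wt_pos z).le _)]
    exact lt_of_le_of_lt (lintegral_wt_le hp.le hR hμ hν) ENNReal.ofReal_lt_top
  exact (h0.const_mul B).mono' hf.aestronglyMeasurable (ae_of_all _ hB)

/-- uniform lower bound of the integral of `h` -/
lemma lower_bound (hp : 1 ≤ p) (hR : 0 < R) {h : Rd d → ℝ} (hpos : ∀ x, 0 < h x) 
    (hc : Continuous h) :
    ∃ c > 0, ∀ μ : Measure (Rd d), IsProbabilityMeasure μ → MomLE p R μ → Integrable h μ →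
      c ≤ ∫ x, h x ∂μ := by
  obtain ⟨x0, -, hx0⟩ := (isCompact_closedBall (0 : Rd d) (2 * R)).exists_isMinOn
    ⟨0, by simp [hR.le]⟩ hc.continuousOn
  refine ⟨h x0 / 2, half_pos (hpos x0), fun μ hμ hm hi => ?_⟩
  have hp0 : 0 ≤ p := by linarith
  have hint : Integrable (fun x : Rd d => ‖x‖ ^ p) μ := by
    refine ⟨by fun_prop, ?_⟩
    rw [hasFiniteIntegral_iff_ofReal (ae_of_all _ fun z => by positivity)]
    simp_rw [ofReal_norm_rpow hp0]
    exact lt_of_le_of_lt hm ENNReal.ofReal_lt_top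
  have hmom : ∫ x, ‖x‖ ^ p ∂μ ≤ R ^ p := by
    rw [integral_eq_lintegral_of_nonneg_ae (ae_of_all _ fun z => by positivity)
      hint.aestronglyMeasurable]
    simp_rw [ofReal_norm_rpow hp0]
    exact ENNReal.toReal_le_of_le_ofReal (by positivity) hm
  have hpt : ∀ x, h x0 * (1 - ((2 * R) ^ p)⁻¹ * ‖x‖ ^ p) ≤ h x := by
    intro x
    have hq : 0 < (2 * R) ^ p := by positivity
    by_cases hx : ‖x‖ ≤ 2 * R
    · have h1 : h x0 ≤ h x := hx0 (by simpa using hx)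
      have : 0 ≤ ((2 * R) ^ p)⁻¹ * ‖x‖ ^ p := by positivity
      nlinarith [hpos x0]
    · have h1 : (2 * R) ^ p ≤ ‖x‖ ^ p :=
        Real.rpow_le_rpow (by positivity) (not_le.mp hx).le hp0
      have h2 : 1 ≤ ((2 * R) ^ p)⁻¹ * ‖x‖ ^ p := by
        rw [inv_mul_eq_div, one_le_div hq]; exact h1
      nlinarith [hpos x0, hpos x]
  have h3 := integral_mono (μ := μ)
    (((integrable_const (1 : ℝ)).sub (hint.const_mul ((2 * R) ^ p)⁻¹)).const_mul (h x0)) hi hpt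
  refine le_trans ?_ h3
  simp only [Pi.sub_apply]
  rw [integral_const_mul, integral_sub (integrable_const _) (hint.const_mul _),
    integral_const_mul]
  simp only [integral_const, probReal_univ, smul_eq_mul, mul_one]
  have h4 : ((2 * R) ^ p)⁻¹ * ∫ x, ‖x‖ ^ p ∂μ ≤ 1 / 2 := by
    have hRp : 0 < R ^ p := by positivity
    have h2p : (2 : ℝ) ≤ 2 ^ p := by
      simpa using Real.rpow_le_rpow_of_exponent_le (one_le_two (α := ℝ)) hp
    rw [Real.mul_rpow (by norm_num) hR.le, inv_mul_eq_div, div_le_iff₀ (by positivity)]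
    nlinarith
  nlinarith [hpos x0]

lemma inv_sqrt_diff {a b c : ℝ} (hc : 0 < c) (ha : c ≤ a) (hb : c ≤ b) :
    |(√a)⁻¹ - (√b)⁻¹| ≤ (c * √c)⁻¹ * |a - b| := by
  have sc : 0 < √c := Real.sqrt_pos.mpr hc
  have sa : √c ≤ √a := Real.sqrt_le_sqrt ha
  have sb : √c ≤ √b := Real.sqrt_le_sqrt hb
  have sa0 : 0 < √a := sc.trans_le sa
  have sb0 : 0 < √b := sc.trans_le sb
  have e : (√a)⁻¹ - (√b)⁻¹ = (√a * √b * (√a + √b))⁻¹ * (b - a) := by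
    have h1 : b - a = (√b - √a) * (√a + √b) := by
      nlinarith [Real.sq_sqrt (hc.le.trans ha), Real.sq_sqrt (hc.le.trans hb)]
    rw [h1]
    field_simp
  rw [e, abs_mul, abs_sub_comm b a, abs_of_pos (by positivity)]
  refine mul_le_mul_of_nonneg_right (inv_anti₀ (by positivity) ?_) (abs_nonneg _)
  calc c * √c = √c * √c * √c := by rw [Real.mul_self_sqrt hc.le]
    _ ≤ √a * √b * (√a + √b) := by gcongr; linarith

end cpl

lemma continuous_of_lip {d : ℕ} {h : Rd d → ℝ} {ς L : ℝ}  
    (hl : ∀ x y : Rd d, |h x - h y| ≤ L * (1 + ‖x‖ + ‖y‖) ^ ς * ‖x - y‖) : Continuous h := by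
  rw [continuous_iff_continuousAt]
  intro x
  rw [ContinuousAt, tendsto_iff_dist_tendsto_zero]
  have hb : Filter.Tendsto (fun y => L * (1 + ‖y‖ + ‖x‖) ^ ς * ‖y - x‖) (nhds x) (nhds 0) := by
    have : ContinuousAt (fun y => L * (1 + ‖y‖ + ‖x‖) ^ ς * ‖y - x‖) x := by
      refine ContinuousAt.mul (ContinuousAt.mul continuousAt_const
        (ContinuousAt.rpow_const (by fun_prop) (Or.inl ?_))) (by fun_prop)
      positivity
    simpa [ContinuousAt] using this
  exact squeeze_zero (fun _ => dist_nonneg) (fun y => by rw [Real.dist_eq]; exact hl y x) hb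

lemma Wp_dirac_le {d : ℕ} {p R : ℝ} (hp : 0 < p) (hR : 0 < R) {μ : Measure (Rd d)}
    [IsProbabilityMeasure μ] (hm : MomLE p R μ) : Wp p μ (Measure.dirac 0) ≤ R := by
  have hmeas : Measurable (fun x : Rd d => (x, (0 : Rd d))) := by fun_prop
  have h1 : (μ.map (fun x : Rd d => (x, (0 : Rd d)))).map Prod.fst = μ := by
    rw [Measure.map_map measurable_fst hmeas]
    exact Measure.map_id
  have h2 : (μ.map (fun x : Rd d => (x, (0 : Rd d)))).map Prod.snd = Measure.dirac 0 := by
    rw [Measure.map_map measurable_snd hmeas]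
    change μ.map (fun _ => (0 : Rd d)) = _
    rw [Measure.map_const]; simp
  have h3 : (∫⁻ z, (‖z.1 - z.2‖₊ : ℝ≥0∞) ^ p ∂(μ.map (fun x : Rd d => (x, (0 : Rd d))))) ^ (1 / p)
      ≤ ENNReal.ofReal R := by
    rw [lintegral_map (by fun_prop) hmeas]
    simp only [sub_zero]
    calc _ ≤ (ENNReal.ofReal (R ^ p)) ^ (1 / p) := ENNReal.rpow_le_rpow hm (by positivity)
      _ = ENNReal.ofReal R := by
        rw [ENNReal.ofReal_rpow_of_pos (by positivity), ← Real.rpow_mul hR.le]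
        congr 1
        field_simp
        simp
  exact (Wp_le h1 h2 (ne_top_of_le_ne_top ENNReal.ofReal_ne_top h3)).trans
    (ENNReal.toReal_le_of_le_ofReal hR.le h3)

lemma sq_bound {w D t A B ς p : ℝ} (hw : 1 ≤ w) (hp : 2 * ς + 2 ≤ p) :
    (A * (w ^ ς * D) + B * (w ^ (ς + 1) * t)) ^ 2 ≤
      2 * A ^ 2 * (w ^ (p - 2) * D ^ (2 : ℝ)) + 2 * B ^ 2 * t ^ 2 * w ^ p := by
  have w0 : 0 ≤ w := by linarith
  have e1 : (w ^ ς) ^ 2 ≤ w ^ (p - 2) := by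
    rw [← Real.rpow_mul_natCast w0]
    exact Real.rpow_le_rpow_of_exponent_le hw (by push_cast; linarith)
  have e2 : (w ^ (ς + 1)) ^ 2 ≤ w ^ p := by
    rw [← Real.rpow_mul_natCast w0]
    exact Real.rpow_le_rpow_of_exponent_le hw (by push_cast; linarith)
  rw [Real.rpow_two]
  have f1 := mul_le_mul_of_nonneg_left e1 (by positivity : 0 ≤ 2 * A ^ 2 * D ^ 2)
  have f2 := mul_le_mul_of_nonneg_left e2 (by positivity : 0 ≤ 2 * B ^ 2 * t ^ 2)
  nlinarith [sq_nonneg (A * (w ^ ς * D) - B * (w ^ (ς + 1) * t))]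

lemma h_diff {d : ℕ} {p R ς L : ℝ} {π : Measure (Rd d × Rd d)} (hp : 1 ≤ p) (hR : 0 < R)
    (hςp : ς + 1 ≤ p) (hL : 0 < L)
    (hμ : MomLE p R (π.map Prod.fst)) (hν : MomLE p R (π.map Prod.snd))
    [IsProbabilityMeasure π] {h : Rd d → ℝ}
    (hl : ∀ x y : Rd d, |h x - h y| ≤ L * (1 + ‖x‖ + ‖y‖) ^ ς * ‖x - y‖)
    (i1 : Integrable (fun z => h z.1) π) (i2 : Integrable (fun z => h z.2) π) :
    |∫ z, h z.1 ∂π - ∫ z, h z.2 ∂π| ≤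
      L * Kc p R * ((∫⁻ z, (‖z.1 - z.2‖₊ : ℝ≥0∞) ^ p ∂π) ^ (1 / p)).toReal := by
  have hp0 : 0 < p := by linarith
  have hK : 0 ≤ Kc p R := by linarith [one_le_Kc hp0.le hR]
  have hfin := ENNReal.rpow_ne_top_of_nonneg (y := 1 / p) (by positivity)
    (cost_ne_top hp0 hR hμ hν)
  have key : ‖∫ z, (h z.1 - h z.2) ∂π‖ₑ ≤ ENNReal.ofReal L * (ENNReal.ofReal (Kc p R) *
      (∫⁻ z, (‖z.1 - z.2‖₊ : ℝ≥0∞) ^ p ∂π) ^ (1 / p)) := by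
    refine (enorm_integral_le_lintegral_enorm _).trans ?_
    refine le_trans ?_ (mul_le_mul_right (holder_wt hp0 hR zero_le_one hp hμ hν) _)
    rw [← lintegral_const_mul' _ _ ENNReal.ofReal_ne_top]
    apply lintegral_mono
    intro z
    dsimp only
    rw [← ENNReal.ofReal_mul hL.le, ← ofReal_norm, Real.norm_eq_abs]
    apply ENNReal.ofReal_le_ofReal
    refine (hl _ _).trans ?_
    rw [Real.rpow_one, mul_assoc]
    gcongr
    exact Real.rpow_le_rpow_of_exponent_le (one_le_wt z) (by linarith)
  rw [← integral_sub i1 i2, ← Real.norm_eq_abs, ← toReal_enorm]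
  refine (ENNReal.toReal_mono ?_ key).trans (le_of_eq ?_)
  · exact ENNReal.mul_ne_top ENNReal.ofReal_ne_top (ENNReal.mul_ne_top ENNReal.ofReal_ne_top hfin)
  · rw [ENNReal.toReal_mul, ENNReal.toReal_mul, ENNReal.toReal_ofReal hL.le,
      ENNReal.toReal_ofReal hK, mul_assoc]

/-- **Mean-square stability estimate for `g(x) S(μ) / √(∫ h dμ)` along couplings.**
If `g, h` satisfy the local Lipschitz bound with exponent `ς`, `S` is `W_p`-Lipschitz on
`P_{p,R}(ℝ^d)`, and `p ≥ 2ς + 2`, then there is a constant `C > 0` such that for all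
`μ, ν ∈ P_{p,R}(ℝ^d)` and every coupling `π` of `μ` and `ν`,
`(∬ |g(x)S(μ)/√(∫h dμ) - g(y)S(ν)/√(∫h dν)|² dπ)^{1/2} ≤ C (∬ |x-y|^p dπ)^{1/p}`. -/
theorem coupling_stability_sqrt_ratio
    (d m n : ℕ) (hd : 1 ≤ d) (hm : 1 ≤ m) (hn : 1 ≤ n)
    (p R : ℝ) (hR : 0 < R)
    (g : Rd d → Matrix (Fin m) (Fin n) ℝ) (h : Rd d → ℝ) (hpos : ∀ x, 0 < h x)
    (S : Measure (Rd d) → (Fin n → ℝ))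
    (ς L : ℝ) (hς : 0 ≤ ς) (hL : 0 < L)
    (hlip : ∀ x y : Rd d,
      max (frobNorm (g x - g y)) |h x - h y| ≤ L * (1 + ‖x‖ + ‖y‖) ^ ς * ‖x - y‖)
    (LS : ℝ) (hLS : 0 < LS)
    (hSlip : ∀ μ ν : Measure (Rd d),
      IsProbabilityMeasure μ → IsProbabilityMeasure ν →
      MomLE p R μ → MomLE p R ν →
      vecNorm (S μ - S ν) ≤ LS * Wp p μ ν)
    (hp : 2 * ς + 2 ≤ p) :
    ∃ C > 0, ∀ μ ν : Measure (Rd d),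
      IsProbabilityMeasure μ → IsProbabilityMeasure ν →
      MomLE p R μ → MomLE p R ν →
      ∀ π : Measure (Rd d × Rd d), π.map Prod.fst = μ → π.map Prod.snd = ν →
      (∫⁻ z, ENNReal.ofReal
          ((vecNorm ((Real.sqrt (∫ x, h x ∂μ))⁻¹ • (g z.1).mulVec (S μ)
            - (Real.sqrt (∫ x, h x ∂ν))⁻¹ • (g z.2).mulVec (S ν))) ^ 2) ∂π) ^ (1 / 2 : ℝ)
        ≤ ENNReal.ofReal C *
          (∫⁻ z, (‖z.1 - z.2‖₊ : ℝ≥0∞) ^ p ∂π) ^ (1 / p) := by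
  have hp1 : 1 ≤ p := by linarith
  have hp0 : 0 < p := by linarith
  have hlh : ∀ x y : Rd d, |h x - h y| ≤ L * (1 + ‖x‖ + ‖y‖) ^ ς * ‖x - y‖ :=
    fun x y => (le_max_right _ _).trans (hlip x y)
  have hlg : ∀ x y : Rd d, frobNorm (g x - g y) ≤ L * (1 + ‖x‖ + ‖y‖) ^ ς * ‖x - y‖ :=
    fun x y => (le_max_left _ _).trans (hlip x y)
  have hcont := continuous_of_lip hlh
  obtain ⟨c, hc, hlow⟩ := lower_bound hp1 hR hpos hcont
  have hK := one_le_Kc hp0.le hR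
  set K := Kc p R with hKdef
  have hdir : MomLE p R (Measure.dirac (0 : Rd d)) := by
    unfold MomLE
    rw [lintegral_dirac]
    simp [ENNReal.zero_rpow_of_pos hp0]
  set M := vecNorm (S (Measure.dirac 0)) + LS * R with hM
  have hM0 : 0 ≤ M := add_nonneg (vecNorm_nonneg _) (by positivity)
  have hSM : ∀ μ : Measure (Rd d), IsProbabilityMeasure μ → MomLE p R μ → vecNorm (S μ) ≤ M := by
    intro μ hμ hm
    have h1 := hSlip μ (Measure.dirac 0) hμ inferInstance hm hdir
    have h2 := Wp_dirac_le hp0 hR hm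
    have h3 := vecNorm_add_le (S μ - S (Measure.dirac 0)) (S (Measure.dirac 0))
    rw [sub_add_cancel] at h3
    have h4 := mul_le_mul_of_nonneg_left h2 hLS.le
    linarith
  set G := frobNorm (g 0) + L with hG
  have hG0 : 0 ≤ G := add_nonneg (frobNorm_nonneg _) hL.le
  have hww : ∀ z : Rd d × Rd d, 1 ≤ wt z ^ (ς + 1) :=
    fun z => Real.one_le_rpow (one_le_wt z) (by linarith)
  have hgrow : ∀ (z : Rd d × Rd d) (x : Rd d), ‖x‖ + 1 ≤ wt z →
      L * (1 + ‖x‖ + ‖(0 : Rd d)‖) ^ ς * ‖x - 0‖ ≤ L * wt z ^ (ς + 1) := by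
    intro z x hx
    rw [norm_zero, sub_zero, Real.rpow_add (wt_pos z), Real.rpow_one, mul_assoc]
    have := norm_nonneg x
    have := wt_pos z
    gcongr <;> linarith
  have hgb : ∀ (z : Rd d × Rd d) (v : Fin n → ℝ),
      vecNorm ((g z.2).mulVec v) ≤ G * wt z ^ (ς + 1) * vecNorm v := by
    intro z v
    have h1 : (g z.2).mulVec v = (g z.2 - g 0).mulVec v + (g 0).mulVec v := by
      rw [← Matrix.add_mulVec, sub_add_cancel]
    have h2 := hgrow z z.2 (by unfold wt; linarith [norm_nonneg z.1])
    have h3 := (hlg z.2 0).trans h2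
    have hv := vecNorm_nonneg v
    have hw := hww z
    have hf := frobNorm_nonneg (g 0)
    rw [h1]
    calc _ ≤ frobNorm (g z.2 - g 0) * vecNorm v + frobNorm (g 0) * vecNorm v :=
          (vecNorm_add_le _ _).trans
            (add_le_add (vecNorm_mulVec_le _ _) (vecNorm_mulVec_le _ _))
      _ = (frobNorm (g z.2 - g 0) + frobNorm (g 0)) * vecNorm v := by ring
      _ ≤ _ := by
          apply mul_le_mul_of_nonneg_right _ hv
          rw [hG]
          nlinarith
  have hsc : 0 < √c := Real.sqrt_pos.mpr hc
  set A := (√c)⁻¹ * L * M with hA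
  set B := (√c)⁻¹ * G * LS + (c * √c)⁻¹ * L * K * G * M with hB
  refine ⟨√((2 * A ^ 2 + 2 * B ^ 2) * K + 1), Real.sqrt_pos.mpr (by positivity), ?_⟩
  intro μ ν hμ hν hmμ hmν π hπ1 hπ2
  have hprob : IsProbabilityMeasure π := by
    subst hπ1
    exact (Measure.isProbabilityMeasure_map_iff measurable_fst.aemeasurable).mp hμ
  have hm1 : MomLE p R (π.map Prod.fst) := hπ1 ▸ hmμ
  have hm2 : MomLE p R (π.map Prod.snd) := hπ2 ▸ hmν
  have hcost := cost_ne_top hp0 hR hm1 hm2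
  have hfin := ENNReal.rpow_ne_top_of_nonneg (y := 1 / p) (by positivity) hcost
  have hhb : ∀ (z : Rd d × Rd d) (x : Rd d), ‖x‖ + 1 ≤ wt z →
      |h x| ≤ (h 0 + L) * wt z ^ p := by
    intro z x hx
    have h1 := (hlh x 0).trans (hgrow z x hx)
    have h2 : wt z ^ (ς + 1) ≤ wt z ^ p :=
      Real.rpow_le_rpow_of_exponent_le (one_le_wt z) (by linarith)
    have h3 := hww z
    rw [abs_of_pos (hpos x)]
    have h4 := (abs_le.mp h1).2
    nlinarith [hpos 0]
  have i1 : Integrable (fun z : Rd d × Rd d => h z.1) π :=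
    integrable_of_bound hp0 hR hm1 hm2 (hcont.measurable.comp measurable_fst)
      (fun z => hhb z z.1 (by unfold wt; linarith [norm_nonneg z.2]))
  have i2 : Integrable (fun z : Rd d × Rd d => h z.2) π :=
    integrable_of_bound hp0 hR hm1 hm2 (hcont.measurable.comp measurable_snd)
      (fun z => hhb z z.2 (by unfold wt; linarith [norm_nonneg z.1]))
  have ea : ∫ x, h x ∂μ = ∫ z, h z.1 ∂π := by
    rw [← hπ1, integral_map measurable_fst.aemeasurable hcont.aestronglyMeasurable]
  have eb : ∫ x, h x ∂ν = ∫ z, h z.2 ∂π := by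
    rw [← hπ2, integral_map measurable_snd.aemeasurable hcont.aestronglyMeasurable]
  have iμ : Integrable h μ := by
    rw [← hπ1]
    exact (integrable_map_measure hcont.aestronglyMeasurable measurable_fst.aemeasurable).mpr i1
  have iν : Integrable h ν := by
    rw [← hπ2]
    exact (integrable_map_measure hcont.aestronglyMeasurable measurable_snd.aemeasurable).mpr i2
  have hab := h_diff hp1 hR (by linarith) hL hm1 hm2 hlh i1 i2
  have hW := Wp_le hπ1 hπ2 hfin
  have hla := hlow μ hμ hmμ iμ
  have hlb := hlow ν hν hmν iν
  have hol := holder_wt hp0 hR zero_le_two (by linarith : (2 : ℝ) ≤ p) hm1 hm2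
  have hwt := lintegral_wt_le hp0.le hR hm1 hm2
  rw [← ea, ← eb] at hab
  set a := ∫ x, h x ∂μ with ha
  set b := ∫ x, h x ∂ν with hb
  have e2 : (∫⁻ z, (‖z.1 - z.2‖₊ : ℝ≥0∞) ^ p ∂π) ^ (2 / p) =
      ENNReal.ofReal (((∫⁻ z, (‖z.1 - z.2‖₊ : ℝ≥0∞) ^ p ∂π) ^ (1 / p)).toReal ^ 2) := by
    rw [ENNReal.ofReal_pow ENNReal.toReal_nonneg, ENNReal.ofReal_toReal hfin,
      ← ENNReal.rpow_mul_natCast]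
    congr 1
    push_cast
    ring
  rw [e2] at hol
  rw [← ENNReal.ofReal_toReal hfin]
  set t := ((∫⁻ z, (‖z.1 - z.2‖₊ : ℝ≥0∞) ^ p ∂π) ^ (1 / p)).toReal with ht
  have ht0 : 0 ≤ t := ENNReal.toReal_nonneg
  have hSd : vecNorm (S μ - S ν) ≤ LS * t :=
    (hSlip μ ν hμ hν hmμ hmν).trans (mul_le_mul_of_nonneg_left hW hLS.le)
  have hinva : |(√a)⁻¹| ≤ (√c)⁻¹ := by
    rw [abs_of_nonneg (by positivity)]
    exact inv_anti₀ hsc (Real.sqrt_le_sqrt hla)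
  have hdiff : |(√a)⁻¹ - (√b)⁻¹| ≤ (c * √c)⁻¹ * (L * K * t) :=
    (inv_sqrt_diff hc hla hlb).trans (mul_le_mul_of_nonneg_left hab (by positivity))
  have hpt : ∀ z : Rd d × Rd d,
      vecNorm ((√a)⁻¹ • (g z.1).mulVec (S μ) - (√b)⁻¹ • (g z.2).mulVec (S ν)) ≤
        A * (wt z ^ ς * ‖z.1 - z.2‖) + B * (wt z ^ (ς + 1) * t) := by
    intro z
    have hdec : (√a)⁻¹ • (g z.1).mulVec (S μ) - (√b)⁻¹ • (g z.2).mulVec (S ν) =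
        (√a)⁻¹ • (g z.1 - g z.2).mulVec (S μ) + (√a)⁻¹ • (g z.2).mulVec (S μ - S ν)
          + ((√a)⁻¹ - (√b)⁻¹) • (g z.2).mulVec (S ν) := by
      rw [Matrix.sub_mulVec, Matrix.mulVec_sub]
      module
    have hw := hww z
    have hw' : 0 ≤ wt z ^ ς := Real.rpow_nonneg (wt_pos z).le _
    have t1 : vecNorm ((√a)⁻¹ • (g z.1 - g z.2).mulVec (S μ)) ≤
        (√c)⁻¹ * ((L * wt z ^ ς * ‖z.1 - z.2‖) * M) := by
      rw [vecNorm_smul]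
      refine mul_le_mul hinva ((vecNorm_mulVec_le _ _).trans ?_) (vecNorm_nonneg _) (by positivity)
      exact mul_le_mul (hlg z.1 z.2) (hSM μ hμ hmμ) (vecNorm_nonneg _) (by positivity)
    have t2 : vecNorm ((√a)⁻¹ • (g z.2).mulVec (S μ - S ν)) ≤
        (√c)⁻¹ * (G * wt z ^ (ς + 1) * (LS * t)) := by
      rw [vecNorm_smul]
      refine mul_le_mul hinva ((hgb z _).trans ?_) (vecNorm_nonneg _) (by positivity)
      exact mul_le_mul_of_nonneg_left hSd (by positivity)
    have t3 : vecNorm (((√a)⁻¹ - (√b)⁻¹) • (g z.2).mulVec (S ν)) ≤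
        ((c * √c)⁻¹ * (L * K * t)) * (G * wt z ^ (ς + 1) * M) := by
      rw [vecNorm_smul]
      refine mul_le_mul hdiff ((hgb z _).trans ?_) (vecNorm_nonneg _) (by positivity)
      exact mul_le_mul_of_nonneg_left (hSM ν hν hmν) (by positivity)
    rw [hdec]
    refine (vecNorm_add_le _ _).trans ((add_le_add ((vecNorm_add_le _ _).trans
      (add_le_add t1 t2)) t3).trans (le_of_eq ?_))
    rw [hA, hB]
    ring
  have hint : ∫⁻ z, ENNReal.ofReal
      ((vecNorm ((√a)⁻¹ • (g z.1).mulVec (S μ) - (√b)⁻¹ • (g z.2).mulVec (S ν))) ^ 2) ∂π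
      ≤ ENNReal.ofReal (((2 * A ^ 2 + 2 * B ^ 2) * K) * t ^ 2) := by
    calc _ ≤ ∫⁻ z, (ENNReal.ofReal (2 * A ^ 2) *
            ENNReal.ofReal (wt z ^ (p - 2) * ‖z.1 - z.2‖ ^ (2 : ℝ)) +
            ENNReal.ofReal (2 * B ^ 2 * t ^ 2) * ENNReal.ofReal (wt z ^ p)) ∂π := by
          apply lintegral_mono
          intro z
          dsimp only
          have hw := wt_pos z
          rw [← ENNReal.ofReal_mul (by positivity), ← ENNReal.ofReal_mul (by positivity),
            ← ENNReal.ofReal_add (by positivity) (by positivity)]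
          apply ENNReal.ofReal_le_ofReal
          exact (pow_le_pow_left₀ (vecNorm_nonneg _) (hpt z) 2).trans
            (sq_bound (one_le_wt z) hp)
      _ = ENNReal.ofReal (2 * A ^ 2) *
            ∫⁻ z, ENNReal.ofReal (wt z ^ (p - 2) * ‖z.1 - z.2‖ ^ (2 : ℝ)) ∂π +
            ENNReal.ofReal (2 * B ^ 2 * t ^ 2) * ∫⁻ z, ENNReal.ofReal (wt z ^ p) ∂π := by
          rw [lintegral_add_right _
            ((measurable_wt.pow_const p).ennreal_ofReal.const_mul _),
            lintegral_const_mul' _ _ ENNReal.ofReal_ne_top,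
            lintegral_const_mul' _ _ ENNReal.ofReal_ne_top]
      _ ≤ ENNReal.ofReal (2 * A ^ 2) * (ENNReal.ofReal K * ENNReal.ofReal (t ^ 2)) +
            ENNReal.ofReal (2 * B ^ 2 * t ^ 2) * ENNReal.ofReal K := by
          gcongr
      _ = _ := by
          rw [← ENNReal.ofReal_mul (by positivity), ← ENNReal.ofReal_mul (by positivity),
            ← ENNReal.ofReal_mul (by positivity),
            ← ENNReal.ofReal_add (by positivity) (by positivity)]
          congr 1
          ring
  refine (ENNReal.rpow_le_rpow hint (by norm_num)).trans ?_
  rw [ENNReal.ofReal_rpow_of_nonneg (by positivity) (by norm_num),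
    ← ENNReal.ofReal_mul (by positivity)]
  apply ENNReal.ofReal_le_ofReal
  rw [← Real.sqrt_eq_rpow, Real.sqrt_mul (by positivity), Real.sqrt_sq ht0]
  gcongr
  linarith

end
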